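/- Let n ≥ 2 and let G_0, G_1, …, G_T be an actively dynamic sequence with G_0 = P_n the path graph on n vertices, T ≥ 1, such that the endpoints 0 and n−1 are reachable in G_T with dist_{G_T}(0, n−1) ≤ ⌈log₂ n⌉. Then there exists a round i < T with |E(G_{i+1}) \ E(G_i)| ≥ (n − 1 − ⌈log₂ n⌉)/T. In particular, if T ≤ C·⌈log₂ n⌉ for a constant C, some round activates Ω(n/log n) edges. -/

import Mathlib

/-- A sequence of simple graphs on a common vertex set is actively dynamic (up to time `T`)
if, for every round `i < T`, every edge of `G (i+1)` that is not an edge of `G i` joins two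
vertices that have a common neighbor in `G i`. -/
def ActivelyDynamic {V : Type*} (Gs : ℕ → SimpleGraph V) (T : ℕ) : Prop :=
  ∀ i < T, ∀ u v : V, (Gs (i + 1)).Adj u v → ¬ (Gs i).Adj u v →
    ∃ w : V, (Gs i).Adj u w ∧ (Gs i).Adj w v

/-- The path graph `P_n` on vertices `{0, …, n-1}` with edges `{j, j+1}`. -/
def pathGraph' (n : ℕ) : SimpleGraph (Fin n) :=
  SimpleGraph.fromRel (fun u v => u.val + 1 = v.val)

/-!
A shortest path in `G (i + 1)` is rerouted in `G i` by replacing each newly activated edge with two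
edges through a common neighbor. A path uses each edge at most once, so the distance between two
fixed vertices drops in a round by at most the number of edges activated in it. Over `T` rounds the
endpoints of `P_n` must come closer by at least `n - 1 - ⌈log₂ n⌉`, and the busiest round activates
at least the average number of edges.
-/

section EDist

variable {V : Type*} {G H : SimpleGraph V}

theorem natCast_le_add_edist_of_forall_adj {f : V → ℕ}
    (hf : ∀ a b, G.Adj a b → f b ≤ f a + 1) (u v : V) :
    (f v : ℕ∞) ≤ f u + G.edist u v := by
  have le_add_length {a b : V} (p : G.Walk a b) : f b ≤ f a + p.length := by
    induction p with
    | nil => simp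
    | cons hab p ih =>
      rw [SimpleGraph.Walk.length_cons]
      linarith [hf _ _ hab]
  by_cases huv : G.Reachable u v
  · obtain ⟨p, hp⟩ := huv.exists_walk_length_eq_edist
    rw [← hp]
    exact_mod_cast le_add_length p
  · simp [SimpleGraph.edist_eq_top_of_not_reachable huv]

theorem edist_le_length_add_mul_encard_edgeSet_sdiff {k : ℕ∞}
    (hGH : ∀ a b, H.Adj a b → G.edist a b ≤ 1 + k) {u v : V} {p : H.Walk u v} (hp : p.IsTrail) :
    G.edist u v ≤ p.length + k * (p.edgeSet \ G.edgeSet).encard := by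
  induction p with
  | nil => simp
  | @cons a b c hab p ih =>
    obtain ⟨hp, hab_notMem⟩ := SimpleGraph.Walk.isTrail_cons _ _ |>.mp hp
    rw [SimpleGraph.Walk.length_cons, SimpleGraph.Walk.edgeSet_cons]
    push_cast
    by_cases hG : G.Adj a b
    · rw [Set.insert_sdiff_of_mem _ (G.mem_edgeSet.mpr hG)]
      calc G.edist a c ≤ G.edist a b + G.edist b c := G.edist_triangle
        _ ≤ 1 + (p.length + k * (p.edgeSet \ G.edgeSet).encard) :=
          add_le_add (SimpleGraph.edist_eq_one_iff_adj.mpr hG).le (ih hp)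
        _ = p.length + 1 + k * (p.edgeSet \ G.edgeSet).encard := by ring
    · rw [Set.insert_sdiff_of_notMem _ (mt G.mem_edgeSet.mp hG),
        Set.encard_insert_of_notMem fun h ↦ hab_notMem h.1]
      calc G.edist a c ≤ G.edist a b + G.edist b c := G.edist_triangle
        _ ≤ (1 + k) + (p.length + k * (p.edgeSet \ G.edgeSet).encard) :=
          add_le_add (hGH a b hab) (ih hp)
        _ = p.length + 1 + k * ((p.edgeSet \ G.edgeSet).encard + 1) := by ring

theorem edist_le_edist_add_mul_encard_edgeSet_sdiff {k : ℕ∞}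
    (hGH : ∀ a b, H.Adj a b → G.edist a b ≤ 1 + k) (u v : V) :
    G.edist u v ≤ H.edist u v + k * (H.edgeSet \ G.edgeSet).encard := by
  by_cases huv : H.Reachable u v
  · obtain ⟨p, hp, hlen⟩ := huv.exists_path_of_dist
    rw [← huv.coe_dist_eq_edist, ← hlen]
    refine (edist_le_length_add_mul_encard_edgeSet_sdiff hGH hp.isTrail).trans ?_
    gcongr
    exact p.edges_subset_edgeSet
  · simp [SimpleGraph.edist_eq_top_of_not_reachable huv]

end EDist

namespace ActivelyDynamic

variable {V : Type*} {Gs : ℕ → SimpleGraph V} {T : ℕ}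

theorem edist_le_two (hdyn : ActivelyDynamic Gs T) {i : ℕ} (hi : i < T) {a b : V}
    (hab : (Gs (i + 1)).Adj a b) : (Gs i).edist a b ≤ 2 := by
  by_cases h : (Gs i).Adj a b
  · exact (SimpleGraph.edist_eq_one_iff_adj.mpr h).trans_le one_le_two
  · obtain ⟨w, haw, hwb⟩ := hdyn i hi a b hab h
    exact (SimpleGraph.Walk.cons haw hwb.toWalk).edist_le

theorem edist_le_edist_add_sum_encard (hdyn : ActivelyDynamic Gs T) (u v : V) :
    (Gs 0).edist u v ≤ (Gs T).edist u v +
      ∑ i ∈ Finset.range T, ((Gs (i + 1)).edgeSet \ (Gs i).edgeSet).encard := by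
  induction T with
  | zero => simp
  | succ T ih =>
    have last_round : (Gs T).edist u v ≤
        (Gs (T + 1)).edist u v + ((Gs (T + 1)).edgeSet \ (Gs T).edgeSet).encard := by
      simpa using edist_le_edist_add_mul_encard_edgeSet_sdiff (k := 1)
        (fun a b hab ↦ (hdyn.edist_le_two T.lt_succ_self hab).trans_eq one_add_one_eq_two.symm) u v
    rw [Finset.sum_range_succ_comm, ← add_assoc]
    exact (ih fun i hi ↦ hdyn i (hi.trans T.lt_succ_self)).trans (by gcongr)

theorem exists_edist_le_edist_add_mul_encard (hdyn : ActivelyDynamic Gs T) (hT : 1 ≤ T) (u v : V) :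
    ∃ i < T, (Gs 0).edist u v ≤
      (Gs T).edist u v + T * ((Gs (i + 1)).edgeSet \ (Gs i).edgeSet).encard := by
  obtain ⟨i, hi, hmax⟩ := (Finset.range T).exists_max_image
    (fun i ↦ ((Gs (i + 1)).edgeSet \ (Gs i).edgeSet).encard)
    (Finset.nonempty_range_iff.mpr (Nat.one_le_iff_ne_zero.mp hT))
  refine ⟨i, Finset.mem_range.mp hi, (hdyn.edist_le_edist_add_sum_encard u v).trans ?_⟩
  gcongr
  simpa using Finset.sum_le_card_nsmul _ _ _ hmax

end ActivelyDynamic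

theorem path_activations_per_round_lower_bound_general {V : Type*} {Gs : ℕ → SimpleGraph V}
    {T : ℕ} (hT : 1 ≤ T) (hdyn : ActivelyDynamic Gs T)
    (hfin : ∀ i < T, ((Gs (i + 1)).edgeSet \ (Gs i).edgeSet).Finite) {u v : V} {d k : ℕ}
    (hd : d ≤ (Gs 0).edist u v) (hk : (Gs T).edist u v ≤ k) :
    ∃ i < T, ((d : ℚ) - k) / T ≤ (((Gs (i + 1)).edgeSet \ (Gs i).edgeSet).ncard : ℚ) := by
  obtain ⟨i, hi, hround⟩ := hdyn.exists_edist_le_edist_add_mul_encard hT u v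
  refine ⟨i, hi, ?_⟩
  have h : d ≤ k + T * ((Gs (i + 1)).edgeSet \ (Gs i).edgeSet).ncard := by
    have := hd.trans (hround.trans (add_le_add_left hk _))
    rw [← (hfin i hi).cast_ncard_eq] at this
    exact_mod_cast this
  rw [div_le_iff₀' (by exact_mod_cast hT), sub_le_iff_le_add']
  exact_mod_cast h

theorem natCast_le_add_edist_pathGraph' {n : ℕ} (u v : Fin n) :
    (v : ℕ∞) ≤ u + (pathGraph' n).edist u v :=
  natCast_le_add_edist_of_forall_adj (fun a b hab ↦ by
    simp only [pathGraph', SimpleGraph.fromRel_adj] at hab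
    omega) u v

/-- Lower bound on edge activations per round: if an actively dynamic sequence starting
from the path `P_n` brings the endpoints within distance `⌈log₂ n⌉` in `T ≥ 1` rounds,
then some round activates at least `(n - 1 - ⌈log₂ n⌉)/T` edges. -/
theorem path_activations_per_round_lower_bound (n : ℕ) (hn : 2 ≤ n)
    (Gs : ℕ → SimpleGraph (Fin n)) (T : ℕ) (hT : 1 ≤ T)
    (hdyn : ActivelyDynamic Gs T) (h0 : Gs 0 = pathGraph' n)
    (hreach : (Gs T).Reachable ⟨0, by omega⟩ ⟨n - 1, by omega⟩)
    (hdist : (Gs T).dist ⟨0, by omega⟩ ⟨n - 1, by omega⟩ ≤ Nat.clog 2 n) :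
    ∃ i < T, ((n : ℚ) - 1 - (Nat.clog 2 n : ℚ)) / (T : ℚ)
      ≤ (((Gs (i + 1)).edgeSet \ (Gs i).edgeSet).ncard : ℚ) := by
  rw [← Nat.cast_pred (by omega)]
  exact path_activations_per_round_lower_bound_general hT hdyn (fun _ _ ↦ Set.toFinite _)
    (by simpa [h0] using natCast_le_add_edist_pathGraph' (n := n) ⟨0, by omega⟩ ⟨n - 1, by omega⟩)
    (by rw [← hreach.coe_dist_eq_edist]; exact_mod_cast hdist)
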